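/- Assume the finite-state Euler–Maruyama setting with additive noise (σ(x,i) = σ(i)), the global Lipschitz condition with constant L, condition (H) with parameters c_0 and (β_i), and the averaging condition Σ_i μ_i β_i < 0. Fix p ∈ (0,1) with η_p > 0, a strictly positive eigenvector ξ^{(p)} of Q_p with eigenvalue −η_p, and the constants ξ̂_0, ξ̄_0, β_0, q_0, α as in Theorem 3.1. On a probability space carrying an i.i.d. sequence (Z_k)_{k≥0} of standard Gaussian vectors in ℝ^m and an independent discrete-time Markov chain (J_k)_{k≥0} on S with one-step transition matrix exp(δQ) and J_0 = i, define for each x ∈ ℝⁿ the synchronously coupled Euler–Maruyama sequences Ȳ^x_0 = x, Ȳ^x_{k+1} = Ȳ^x_k + δ·b(Ȳ^x_k, J_k) + √δ·σ(J_k) Z_k. Then for every δ ∈ (0,1) with δ < (1/(16L²)) ∧ (η_p/α)^{2/p}, every x, y ∈ ℝⁿ, i ∈ S, and every k ≥ 0: E|Ȳ^x_k − Ȳ^y_k|^p ≤ ξ̂_0 ξ̄_0 |x−y|^p e^{−(η_p − α δ^{p/2}) k δ}. -/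

import Mathlib

open MeasureTheory ProbabilityTheory

/-- `Q` has nonnegative off-diagonal entries and every row sums to zero
(a conservative Q-matrix). -/
def IsConservativeQMatrix {N : ℕ} (Q : Matrix (Fin N) (Fin N) ℝ) : Prop :=
  (∀ i j, i ≠ j → 0 ≤ Q i j) ∧ ∀ i, ∑ j, Q i j = 0

/-- Irreducibility: any two distinct states are connected by a finite chain of
transitions with strictly positive rates. -/
def MatrixIrreducible {N : ℕ} (Q : Matrix (Fin N) (Fin N) ℝ) : Prop :=
  ∀ i j : Fin N, i ≠ j → ∃ (k : ℕ) (c : ℕ → Fin N),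
    c 0 = i ∧ c k = j ∧ ∀ l < k, 0 < Q (c l) (c (l + 1))

/-- The set of real parts of the (complex) eigenvalues of a real matrix. -/
def spectrumRe {N : ℕ} (M : Matrix (Fin N) (Fin N) ℝ) : Set ℝ :=
  {x : ℝ | ∃ γ ∈ spectrum ℂ (M.map Complex.ofReal), γ.re = x}

/-- The matrix exponential `exp M = ∑ₖ Mᵏ/k!`. -/
noncomputable def matExp {N : ℕ} (M : Matrix (Fin N) (Fin N) ℝ) :
    Matrix (Fin N) (Fin N) ℝ :=
  ∑' k : ℕ, ((k.factorial : ℝ)⁻¹) • M ^ k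

/-- Standard Gaussian measure on `ℝ^m`. -/
noncomputable def stdGaussianPi (m : ℕ) : Measure (Fin m → ℝ) :=
  Measure.pi fun _ => gaussianReal 0 1

/-- The distribution on `Fin N` with weights given by row `i` of `P`. -/
noncomputable def rowMeasure {N : ℕ} (P : Matrix (Fin N) (Fin N) ℝ) (i : Fin N) :
    Measure (Fin N) :=
  ∑ j : Fin N, ENNReal.ofReal (P i j) • Measure.dirac j

/-- Hilbert–Schmidt norm of a real matrix. -/
noncomputable def hsNorm {n m : ℕ} (M : Matrix (Fin n) (Fin m) ℝ) : ℝ :=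
  Real.sqrt (∑ i, ∑ j, (M i j) ^ 2)

/-- One step of the Euler–Maruyama scheme as a transition kernel on `ℝⁿ × S`:
starting from `(x, i)`, the next state is
`(x + δ b(x,i) + √δ σ(x,i) Z, J)` with `Z` standard Gaussian on `ℝ^m` and
`J` distributed according to row `i` of `exp(δ Q)`, independently. -/
noncomputable def EMKernel {n m N : ℕ} (Q : Matrix (Fin N) (Fin N) ℝ)
    (b : EuclideanSpace ℝ (Fin n) → Fin N → EuclideanSpace ℝ (Fin n))
    (σ : EuclideanSpace ℝ (Fin n) → Fin N → Matrix (Fin n) (Fin m) ℝ)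
    (δ : ℝ) (q : EuclideanSpace ℝ (Fin n) × Fin N) :
    Measure (EuclideanSpace ℝ (Fin n) × Fin N) :=
  Measure.map
    (fun zj : (Fin m → ℝ) × Fin N =>
      (q.1 + δ • b q.1 q.2 +
        Real.sqrt δ • ((WithLp.equiv 2 (Fin n → ℝ)).symm ((σ q.1 q.2).mulVec zj.1)),
        zj.2))
    ((stdGaussianPi m).prod (rowMeasure (matExp (δ • Q)) q.2))

/-- `π` is an invariant measure of the kernel `K`. -/
def IsInvariantMeasure {α : Type*} [MeasurableSpace α] (K : α → Measure α)
    (π : Measure α) : Prop :=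
  ∀ A : Set α, MeasurableSet A → ∫⁻ q, K q A ∂π = π A

/-
With additive noise the difference `D k` of the two coupled schemes contains no noise, and the
one-sided Lipschitz bound gives `|D (k+1)|^p ≤ exp (p/2 (δ β_{J k} + δ² L²)) |D k|^p` pathwise. It
remains to bound `E ∏_{l < k} g (J l)` for this factor `g`. If `M` is the transition matrix and
`ξ > 0` satisfies `g · M ξ ≤ r ξ`, the Markov property yields
`E [(∏_{l < k} g (J l)) ξ (J k)] ≤ r^k ξ i`, so only the drift of the Perron eigenvector under
`M = exp (δ Q)` is needed. For `u t = (exp (t Q) ξ) j` the eigenvector equation gives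
`u' = -(η + p/2 β j) u + p/2 ∑_k exp (t Q) j k (β j - β k) ξ k`; the sum only sees chains away from
`j` at time `t`, which has probability at most `q t`, and Grönwall's inequality then shows
`g ξ⁻¹ exp (δ Q) ξ ≤ exp (-(η - O(δ)) δ)`.
-/

section MatrixExponential

open NormedSpace Matrix

lemma one_apply_nonneg {S : Type*} [DecidableEq S] (i j : S) :
    0 ≤ (1 : Matrix S S ℝ) i j := by
  rw [one_apply]
  positivity

variable {S : Type*} [Fintype S] [DecidableEq S] {M : Matrix S S ℝ}

lemma hasSum_exp_apply (M : Matrix S S ℝ) (i j : S) :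
    HasSum (fun k : ℕ => ((k.factorial : ℝ)⁻¹) * (M ^ k) i j) (exp M i j) := by
  open scoped Matrix.Norms.Operator in
  exact Pi.hasSum.1 (Pi.hasSum.1 (exp_series_hasSum_exp' (𝕂 := ℝ) M) i) j

lemma pow_apply_nonneg_of_nonneg (hM : ∀ i j, 0 ≤ M i j) (k : ℕ) (i j : S) :
    0 ≤ (M ^ k) i j := by
  induction k generalizing i j with
  | zero => simpa using one_apply_nonneg i j
  | succ k ih =>
    rw [pow_succ, mul_apply]
    exact Finset.sum_nonneg fun l _ => mul_nonneg (ih i l) (hM l j)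

lemma one_apply_le_exp_apply (hM : ∀ i j, 0 ≤ M i j) (i j : S) :
    (1 : Matrix S S ℝ) i j ≤ exp M i j := by
  simpa using le_hasSum (hasSum_exp_apply M i j) 0 fun k _ =>
    mul_nonneg (by positivity) (pow_apply_nonneg_of_nonneg hM k i j)

lemma exp_add_smul_one (M : Matrix S S ℝ) (c : ℝ) :
    exp (M + c • (1 : Matrix S S ℝ)) = Real.exp c • exp M := by
  have hscalar : exp (c • (1 : Matrix S S ℝ)) = Real.exp c • 1 := by
    rw [smul_one_eq_diagonal, exp_diagonal, smul_one_eq_diagonal, Real.exp_eq_exp_ℝ]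
    congr 1
    exact funext fun i => Pi.coe_exp _ i
  rw [exp_add_of_commute _ _ ((Commute.one_right M).smul_right c), hscalar, mul_smul_one]

lemma exp_mul_one_apply_le_exp_apply (hM : ∀ i j, i ≠ j → 0 ≤ M i j) {c : ℝ}
    (hc : ∀ i, c ≤ M i i) (i j : S) :
    Real.exp c * (1 : Matrix S S ℝ) i j ≤ exp M i j := by
  have hshift : ∀ i j, 0 ≤ (M + (-c) • (1 : Matrix S S ℝ)) i j := by
    intro i j
    obtain rfl | hij := eq_or_ne i j
    · simpa using hc i
    · simpa [hij] using hM i j hij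
  have hexp : exp M = Real.exp c • exp (M + (-c) • (1 : Matrix S S ℝ)) := by
    rw [← exp_add_smul_one, neg_smul, neg_add_cancel_right]
  rw [hexp]
  exact mul_le_mul_of_nonneg_left (one_apply_le_exp_apply hshift i j) (Real.exp_pos c).le

lemma one_add_le_exp_apply_self (hM : ∀ i j, i ≠ j → 0 ≤ M i j) {c : ℝ}
    (hc : ∀ i, c ≤ M i i) (i : S) : 1 + c ≤ exp M i i := by
  have hexp := exp_mul_one_apply_le_exp_apply hM hc i i
  rw [one_apply_eq, mul_one] at hexp
  linarith [Real.add_one_le_exp c]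

lemma exp_apply_nonneg (hM : ∀ i j, i ≠ j → 0 ≤ M i j) (i j : S) : 0 ≤ exp M i j := by
  obtain ⟨c, hc⟩ := (Set.finite_range fun i => M i i).bddBelow
  exact (mul_nonneg (Real.exp_pos c).le (one_apply_nonneg i j)).trans
    (exp_mul_one_apply_le_exp_apply hM (fun i => hc ⟨i, rfl⟩) i j)

lemma hasDerivAt_exp_smul_mulVec (M : Matrix S S ℝ) (v : S → ℝ) (t : ℝ) :
    HasDerivAt (fun s : ℝ => exp (s • M) *ᵥ v) (exp (t • M) *ᵥ (M *ᵥ v)) t := by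
  open scoped Matrix.Norms.Operator in
  rw [mulVec_mulVec]
  exact (LinearMap.toContinuousLinearMap ((mulVecBilin ℝ ℝ).flip v)).hasFDerivAt.comp_hasDerivAt t
    (hasDerivAt_exp_smul_const (𝕂 := ℝ) M t)

lemma exp_mulVec_of_mulVec_eq_zero {v : S → ℝ} (hv : M *ᵥ v = 0) : exp M *ᵥ v = v := by
  have hderiv : ∀ t : ℝ, HasDerivAt (fun s : ℝ => exp (s • M) *ᵥ v) 0 t := fun t => by
    simpa only [hv, mulVec_zero] using hasDerivAt_exp_smul_mulVec M v t
  simpa using is_const_of_deriv_eq_zero (fun t => (hderiv t).differentiableAt)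
    (fun t => (hderiv t).deriv) 1 0

lemma exp_mem_rowStochastic (hM : ∀ i j, i ≠ j → 0 ≤ M i j) (hrow : ∀ i, ∑ j, M i j = 0) :
    exp M ∈ rowStochastic ℝ S :=
  ⟨exp_apply_nonneg hM, exp_mulVec_of_mulVec_eq_zero <| funext fun i => by
    simpa [mulVec, dotProduct] using hrow i⟩

lemma matExp_eq_exp {N : ℕ} (M : Matrix (Fin N) (Fin N) ℝ) : matExp M = exp M := by
  rw [matExp, exp_eq_tsum ℝ]

end MatrixExponential

section Semigroup

open NormedSpace Matrix

lemma le_mul_exp_of_deriv_le_mul {u u' φ φ' : ℝ → ℝ} (hu : ∀ t, HasDerivAt u (u' t) t)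
    (hφ : ∀ t, HasDerivAt φ (φ' t) t) (h : ∀ t, 0 ≤ t → u' t ≤ φ' t * u t) {t : ℝ}
    (ht : 0 ≤ t) : u t ≤ u 0 * Real.exp (φ t - φ 0) := by
  have hderiv : ∀ s, HasDerivAt (fun s => u s * Real.exp (-φ s))
      ((u' s - φ' s * u s) * Real.exp (-φ s)) s := fun s =>
    ((hu s).mul (hφ s).fun_neg.exp).congr_deriv (by ring)
  have hanti : AntitoneOn (fun s => u s * Real.exp (-φ s)) (Set.Ici 0) := by
    refine antitoneOn_of_deriv_nonpos (convex_Ici 0)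
      (fun s _ => (hderiv s).continuousAt.continuousWithinAt)
      (fun s _ => (hderiv s).differentiableAt.differentiableWithinAt) fun s hs => ?_
    rw [interior_Ici] at hs
    rw [(hderiv s).deriv]
    exact mul_nonpos_of_nonpos_of_nonneg (sub_nonpos.2 (h s hs.le)) (Real.exp_pos _).le
  calc u t = u t * Real.exp (-φ t) * Real.exp (φ t) := by
        rw [mul_assoc, ← Real.exp_add, neg_add_cancel, Real.exp_zero, mul_one]
    _ ≤ u 0 * Real.exp (-φ 0) * Real.exp (φ t) :=
        mul_le_mul_of_nonneg_right (hanti Set.self_mem_Ici ht ht) (Real.exp_pos _).le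
    _ = u 0 * Real.exp (φ t - φ 0) := by
        rw [mul_assoc, ← Real.exp_add, neg_add_eq_sub]

variable {S : Type*} [Fintype S] [DecidableEq S]

lemma mulVec_le_of_mem_rowStochastic {M : Matrix S S ℝ} (hM : M ∈ rowStochastic ℝ S)
    {v : S → ℝ} {i : S} (hi : v i ≤ 0) {c : ℝ} (hc : ∀ j, v j ≤ c) :
    (M *ᵥ v) i ≤ (1 - M i i) * c := by
  have hnonneg (j : S) : 0 ≤ M i j := nonneg_of_mem_rowStochastic hM
  have hoff : ∑ j ∈ Finset.univ.erase i, M i j = 1 - M i i := by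
    rw [← sum_row_of_mem_rowStochastic hM i,
      ← Finset.add_sum_erase _ _ (Finset.mem_univ i), add_sub_cancel_left]
  calc (M *ᵥ v) i = M i i * v i + ∑ j ∈ Finset.univ.erase i, M i j * v j :=
        (Finset.add_sum_erase _ _ (Finset.mem_univ i)).symm
    _ ≤ 0 + ∑ j ∈ Finset.univ.erase i, M i j * c :=
        add_le_add (mul_nonpos_of_nonneg_of_nonpos (hnonneg i) hi)
          (Finset.sum_le_sum fun j _ => mul_le_mul_of_nonneg_left (hc j) (hnonneg j))
    _ = (1 - M i i) * c := by rw [zero_add, ← Finset.sum_mul, hoff]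

lemma le_mul_mulVec_of_mem_rowStochastic {M : Matrix S S ℝ} (hM : M ∈ rowStochastic ℝ S)
    {ξ : S → ℝ} {c κ : ℝ} (hc : ∀ k, c ≤ κ * ξ k) (i : S) : c ≤ κ * (M *ᵥ ξ) i :=
  calc c = ∑ k, M i k * c := by
        rw [← Finset.sum_mul, sum_row_of_mem_rowStochastic hM, one_mul]
    _ ≤ ∑ k, M i k * (κ * ξ k) :=
        Finset.sum_le_sum fun k _ =>
          mul_le_mul_of_nonneg_left (hc k) (nonneg_of_mem_rowStochastic hM)
    _ = κ * (M *ᵥ ξ) i := by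
        rw [mulVec, dotProduct, Finset.mul_sum]
        exact Finset.sum_congr rfl fun k _ => mul_left_comm _ _ _

variable {Q : Matrix S S ℝ}

lemma one_sub_exp_smul_apply_self_le (hQ : ∀ i j, i ≠ j → 0 ≤ Q i j) {q : ℝ}
    (hq : ∀ i, -Q i i ≤ q) {t : ℝ} (ht : 0 ≤ t) (i : S) :
    1 - exp (t • Q) i i ≤ t * q := by
  have := one_add_le_exp_apply_self (M := t • Q) (c := -(t * q))
    (fun i j hij => mul_nonneg ht (hQ i j hij))
    (fun i => by
      rw [Matrix.smul_apply, smul_eq_mul, ← mul_neg]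
      exact mul_le_mul_of_nonneg_left (neg_le.1 (hq i)) ht) i
  linarith

lemma exp_smul_mem_rowStochastic (hQ : ∀ i j, i ≠ j → 0 ≤ Q i j)
    (hrow : ∀ i, ∑ j, Q i j = 0) {t : ℝ} (ht : 0 ≤ t) : exp (t • Q) ∈ rowStochastic ℝ S :=
  exp_mem_rowStochastic (fun i j hij => mul_nonneg ht (hQ i j hij)) fun i => by
    simp only [Matrix.smul_apply, ← Finset.smul_sum, hrow, smul_zero]

lemma exp_smul_mulVec_mulVec_le (hQ : ∀ i j, i ≠ j → 0 ≤ Q i j)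
    (hrow : ∀ i, ∑ j, Q i j = 0) {ξ : S → ℝ} (hξ0 : ∀ k, 0 ≤ ξ k) {κ : ℝ}
    (hκ : ∀ k l, ξ k ≤ κ * ξ l) {q : ℝ} (hq : ∀ k, -Q k k ≤ q) {a : S → ℝ} {η : ℝ}
    (hξ : ∀ k, (Q *ᵥ ξ) k ≤ -(η + a k) * ξ k) {j : S} {c : ℝ} (hc : ∀ k, a j - a k ≤ c)
    {t : ℝ} (ht : 0 ≤ t) :
    (exp (t • Q) *ᵥ (Q *ᵥ ξ)) j ≤ (-(η + a j) + c * q * κ * t) * (exp (t • Q) *ᵥ ξ) j := by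
  have hP : exp (t • Q) ∈ rowStochastic ℝ S := exp_smul_mem_rowStochastic hQ hrow ht
  set u := (exp (t • Q) *ᵥ ξ) j
  have hc0 : 0 ≤ c := by simpa using hc j
  have hv : ∀ k, (a j - a k) * ξ k ≤ c * (κ * u) := fun k =>
    mul_le_mul (hc k) (le_mul_mulVec_of_mem_rowStochastic hP (hκ k) j) (hξ0 k) hc0
  have hbound : 0 ≤ c * (κ * u) := by simpa using hv j
  calc (exp (t • Q) *ᵥ (Q *ᵥ ξ)) j
      ≤ (exp (t • Q) *ᵥ (-(η + a j) • ξ + fun k => (a j - a k) * ξ k)) j := by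
        refine Finset.sum_le_sum fun k _ => mul_le_mul_of_nonneg_left ?_
          (nonneg_of_mem_rowStochastic hP)
        rw [Pi.add_apply, Pi.smul_apply, smul_eq_mul]
        linarith [hξ k]
    _ = -(η + a j) * u + (exp (t • Q) *ᵥ fun k => (a j - a k) * ξ k) j := by
        rw [mulVec_add, mulVec_smul, Pi.add_apply, Pi.smul_apply, smul_eq_mul]
    _ ≤ -(η + a j) * u + (1 - exp (t • Q) j j) * (c * (κ * u)) := by
        gcongr
        exact mulVec_le_of_mem_rowStochastic hP (by simp) hv
    _ ≤ -(η + a j) * u + t * q * (c * (κ * u)) := by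
        gcongr
        exact one_sub_exp_smul_apply_self_le hQ hq ht j
    _ = (-(η + a j) + c * q * κ * t) * u := by ring

lemma exp_smul_mulVec_le_mul_exp (hQ : ∀ i j, i ≠ j → 0 ≤ Q i j)
    (hrow : ∀ i, ∑ j, Q i j = 0) {ξ : S → ℝ} (hξ0 : ∀ k, 0 ≤ ξ k) {κ : ℝ}
    (hκ : ∀ k l, ξ k ≤ κ * ξ l) {q : ℝ} (hq : ∀ k, -Q k k ≤ q) {a : S → ℝ} {η : ℝ}
    (hξ : ∀ k, (Q *ᵥ ξ) k ≤ -(η + a k) * ξ k) {j : S} {c : ℝ} (hc : ∀ k, a j - a k ≤ c)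
    {t : ℝ} (ht : 0 ≤ t) :
    (exp (t • Q) *ᵥ ξ) j ≤ ξ j * Real.exp (-(η + a j) * t + c * q * κ * t ^ 2 / 2) := by
  have hφ (s : ℝ) : HasDerivAt (fun s : ℝ => -(η + a j) * s + c * q * κ * s ^ 2 / 2)
      (-(η + a j) + c * q * κ * s) s := by
    refine (((hasDerivAt_id s).const_mul _).add
      ((((hasDerivAt_id s).pow 2).const_mul _).div_const 2)).congr_deriv ?_
    simp only [id_eq, mul_one, pow_one, Nat.cast_ofNat, Nat.add_one_sub_one]
    ring
  simpa using le_mul_exp_of_deriv_le_mul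
    (fun s => hasDerivAt_pi.1 (hasDerivAt_exp_smul_mulVec Q ξ s) j) hφ
    (fun s hs => exp_smul_mulVec_mulVec_le hQ hrow hξ0 hκ hq hξ hc hs) ht

end Semigroup

section MarkovChain

open Matrix

variable {S : Type*} [DecidableEq S] {M : Matrix S S ℝ} {i : S}

/-- The probability that a Markov chain started at `i` with transition matrix `M` follows the path
`c 0, …, c k`; it vanishes if the path does not start at `i`. -/
def pathWeight (M : Matrix S S ℝ) (i : S) {k : ℕ} (c : Fin (k + 1) → S) : ℝ :=
  (if c 0 = i then 1 else 0) * ∏ l : Fin k, M (c l.castSucc) (c l.succ)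

lemma pathWeight_snoc {k : ℕ} (c : Fin (k + 1) → S) (j : S) :
    pathWeight M i (Fin.snoc c j : Fin (k + 2) → S) =
      pathWeight M i c * M (c (Fin.last k)) j := by
  have h0 : (Fin.snoc c j : Fin (k + 2) → S) 0 = c 0 := Fin.snoc_castSucc (i := 0) ..
  simp only [pathWeight, h0, Fin.prod_univ_castSucc (n := k), Fin.succ_castSucc, Fin.succ_last,
    Fin.snoc_castSucc, Fin.snoc_last, mul_assoc]

variable [MeasurableSpace S] {Ω : Type*} [MeasurableSpace Ω]

/-- `J` is, under `P`, a Markov chain started at `i` with transition matrix `M`, expressed through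
its finite-dimensional distributions. -/
structure IsMarkovChainFrom (P : Measure Ω) (M : Matrix S S ℝ) (i : S) (J : ℕ → Ω → S) :
    Prop where
  measurable : ∀ k, Measurable (J k)
  measureReal_path : ∀ (k : ℕ) (c : Fin (k + 1) → S),
    P.real {ω | ∀ l : Fin (k + 1), J l ω = c l} = pathWeight M i c

lemma IsMarkovChainFrom.of_measure_cylinder {P : Measure Ω} {J : ℕ → Ω → S}
    (hM : ∀ i j, 0 ≤ M i j) (hJ : ∀ k, Measurable (J k))
    (hcyl : ∀ (k : ℕ) (c : ℕ → S), P {ω | ∀ l ≤ k, J l ω = c l} =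
      ENNReal.ofReal ((if c 0 = i then (1 : ℝ) else 0) *
        ∏ l ∈ Finset.range k, M (c l) (c (l + 1)))) :
    IsMarkovChainFrom P M i J := by
  refine ⟨hJ, fun k c => ?_⟩
  have hweight : 0 ≤ pathWeight M i c :=
    mul_nonneg (by positivity) (Finset.prod_nonneg fun l _ => hM _ _)
  have hset : {ω | ∀ l : Fin (k + 1), J l ω = c l} =
      {ω | ∀ l ≤ k, J l ω = c (Fin.ofNat (k + 1) l)} := by
    ext ω
    simp only [Set.mem_ofPred_eq, Fin.forall_iff, Nat.lt_succ_iff]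
    refine forall₂_congr fun l hl => ?_
    rw [show (⟨l, Nat.lt_succ_of_le hl⟩ : Fin (k + 1)) = Fin.ofNat (k + 1) l from
      Fin.ext (Nat.mod_eq_of_lt (Nat.lt_succ_of_le hl)).symm]
  have hprod : ∏ l ∈ Finset.range k,
      M (c (Fin.ofNat (k + 1) l)) (c (Fin.ofNat (k + 1) (l + 1))) =
        ∏ l : Fin k, M (c l.castSucc) (c l.succ) := by
    rw [Finset.prod_range]
    refine Finset.prod_congr rfl fun l _ => ?_
    congr 2 <;> ext <;> simp [Fin.ofNat]
  rw [measureReal_def, hset, hcyl k fun l => c (Fin.ofNat (k + 1) l), hprod]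
  exact ENNReal.toReal_ofReal hweight

variable [MeasurableSingletonClass S] {P : Measure Ω} [IsFiniteMeasure P] {J : ℕ → Ω → S}

lemma IsMarkovChainFrom.integrable_prod_mul [Finite S] (hJ : IsMarkovChainFrom P M i J)
    (g h : S → ℝ) (k : ℕ) :
    Integrable (fun ω => (∏ l ∈ Finset.range k, g (J l ω)) * h (J k ω)) P := by
  have hpath : Measurable fun ω (l : Fin (k + 1)) => J l ω :=
    measurable_pi_lambda _ fun l => hJ.measurable l
  simpa only [Function.comp_def, Fin.val_castSucc, Fin.val_last, Finset.prod_range] using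
    (Integrable.of_finite (f := fun c : Fin (k + 1) → S =>
      (∏ l : Fin k, g (c l.castSucc)) * h (c (Fin.last k)))).comp_measurable hpath

lemma IsMarkovChainFrom.integrable_prod [Finite S] (hJ : IsMarkovChainFrom P M i J)
    (g : S → ℝ) (k : ℕ) :
    Integrable (fun ω => ∏ l ∈ Finset.range k, g (J l ω)) P := by
  simpa only [mul_one] using hJ.integrable_prod_mul g (fun _ => 1) k

variable [Fintype S]

lemma IsMarkovChainFrom.integral_path (hJ : IsMarkovChainFrom P M i J)
    {k : ℕ} (F : (Fin (k + 1) → S) → ℝ) :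
    ∫ ω, F (fun l => J l ω) ∂P = ∑ c, pathWeight M i c * F c := by
  have hpath : Measurable fun ω (l : Fin (k + 1)) => J l ω :=
    measurable_pi_lambda _ fun l => hJ.measurable l
  rw [← integral_map hpath.aemeasurable (f := F) Integrable.of_finite.aestronglyMeasurable,
    integral_fintype Integrable.of_finite]
  refine Finset.sum_congr rfl fun c _ => ?_
  rw [smul_eq_mul, map_measureReal_apply hpath (measurableSet_singleton c),
    ← hJ.measureReal_path]
  simp only [Set.preimage, Set.mem_singleton_iff, funext_iff]

lemma IsMarkovChainFrom.integral_path_mul_succ (hJ : IsMarkovChainFrom P M i J)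
    {k : ℕ} (F : (Fin (k + 1) → S) → ℝ) (f : S → ℝ) :
    ∫ ω, F (fun l => J l ω) * f (J (k + 1) ω) ∂P =
      ∫ ω, F (fun l => J l ω) * (M *ᵥ f) (J k ω) ∂P := by
  have hsnoc := hJ.integral_path (k := k + 1)
    fun c => F (fun l => c l.castSucc) * f (c (Fin.last _))
  have hlast := hJ.integral_path (k := k) fun c => F c * (M *ᵥ f) (c (Fin.last _))
  simp only [Fin.val_castSucc, Fin.val_last] at hsnoc hlast
  rw [hsnoc, hlast, ← (Fin.snocEquiv fun _ => S).sum_comp, Fintype.sum_prod_type_right]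
  refine Finset.sum_congr rfl fun c _ => ?_
  simp only [Fin.snocEquiv, Equiv.coe_fn_mk, pathWeight_snoc, Fin.snoc_castSucc, Fin.snoc_last,
    mulVec, dotProduct, Finset.mul_sum]
  exact Finset.sum_congr rfl fun j _ => by ring

lemma IsMarkovChainFrom.integral_prod_mul_succ (hJ : IsMarkovChainFrom P M i J)
    (g f : S → ℝ) (k : ℕ) :
    ∫ ω, (∏ l ∈ Finset.range (k + 1), g (J l ω)) * f (J (k + 1) ω) ∂P =
      ∫ ω, (∏ l ∈ Finset.range k, g (J l ω)) * (g (J k ω) * (M *ᵥ f) (J k ω)) ∂P := by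
  have hprod (ω : Ω) : ∏ l : Fin (k + 1), g (J l ω) =
      (∏ l ∈ Finset.range k, g (J l ω)) * g (J k ω) := by
    rw [← Finset.prod_range fun l => g (J l ω), Finset.prod_range_succ]
  simpa only [hprod, Finset.prod_range_succ, mul_assoc] using
    hJ.integral_path_mul_succ (k := k) (fun c => ∏ l, g (c l)) f

lemma IsMarkovChainFrom.integral_prod_mul_le (hJ : IsMarkovChainFrom P M i J)
    {g f : S → ℝ} (hg : ∀ j, 0 ≤ g j) {r : ℝ}
    (hr : 0 ≤ r) (hdrift : ∀ j, g j * (M *ᵥ f) j ≤ r * f j) (k : ℕ) :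
    ∫ ω, (∏ l ∈ Finset.range k, g (J l ω)) * f (J k ω) ∂P ≤ r ^ k * f i := by
  induction k with
  | zero =>
    have hstart := hJ.integral_path (k := 0) fun c => f (c 0)
    rw [← (Equiv.funUnique (Fin 1) S).symm.sum_comp] at hstart
    simpa [pathWeight] using hstart.le
  | succ k ih =>
    calc ∫ ω, (∏ l ∈ Finset.range (k + 1), g (J l ω)) * f (J (k + 1) ω) ∂P
        = ∫ ω, (∏ l ∈ Finset.range k, g (J l ω)) * (g (J k ω) * (M *ᵥ f) (J k ω)) ∂P :=
          hJ.integral_prod_mul_succ g f k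
      _ ≤ ∫ ω, r * ((∏ l ∈ Finset.range k, g (J l ω)) * f (J k ω)) ∂P := by
          refine integral_mono (hJ.integrable_prod_mul g (fun j => g j * (M *ᵥ f) j) k)
            ((hJ.integrable_prod_mul g f k).const_mul r) fun ω => ?_
          dsimp only
          rw [mul_left_comm r]
          exact mul_le_mul_of_nonneg_left (hdrift _) (Finset.prod_nonneg fun l _ => hg _)
      _ ≤ r * (r ^ k * f i) := by
          rw [integral_const_mul]
          exact mul_le_mul_of_nonneg_left ih hr
      _ = r ^ (k + 1) * f i := by ring

lemma IsMarkovChainFrom.integral_prod_le (hJ : IsMarkovChainFrom P M i J)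
    {g ξ : S → ℝ} (hg : ∀ j, 0 ≤ g j) {κ : ℝ}
    (hξ : ∀ j, 0 < ξ j) (hκ : ∀ j l, ξ j ≤ κ * ξ l) {r : ℝ} (hr : 0 ≤ r)
    (hdrift : ∀ j, g j * (M *ᵥ ξ) j ≤ r * ξ j) (k : ℕ) :
    ∫ ω, ∏ l ∈ Finset.range k, g (J l ω) ∂P ≤ κ * r ^ k := by
  have hκ0 : 0 ≤ κ := nonneg_of_mul_nonneg_left ((hξ i).le.trans (hκ i i)) (hξ i)
  refine le_of_mul_le_mul_right ?_ (hξ i)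
  calc (∫ ω, ∏ l ∈ Finset.range k, g (J l ω) ∂P) * ξ i
      = ∫ ω, (∏ l ∈ Finset.range k, g (J l ω)) * ξ i ∂P := (integral_mul_const _ _).symm
    _ ≤ ∫ ω, κ * ((∏ l ∈ Finset.range k, g (J l ω)) * ξ (J k ω)) ∂P := by
        refine integral_mono ((hJ.integrable_prod g k).mul_const _)
          ((hJ.integrable_prod_mul g ξ k).const_mul κ) fun ω => ?_
        dsimp only
        rw [mul_left_comm κ]
        exact mul_le_mul_of_nonneg_left (hκ _ _) (Finset.prod_nonneg fun l _ => hg _)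
    _ ≤ κ * (r ^ k * ξ i) := by
        rw [integral_const_mul]
        exact mul_le_mul_of_nonneg_left (hJ.integral_prod_mul_le hg hr hdrift k) hκ0
    _ = κ * r ^ k * ξ i := (mul_assoc _ _ _).symm

end MarkovChain

section EulerScheme

variable {E : Type*} [NormedAddCommGroup E] {S : Type*} {b : E → S → E} {β : S → ℝ}
  {L δ p : ℝ}

lemma stronglyMeasurable_apply_of_finite [Finite S] [MeasurableSpace S] [MeasurableSingletonClass S]
    {Ω : Type*} [MeasurableSpace Ω] {J : Ω → S} (hJ : Measurable J) {f : S → Ω → E}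
    (hf : ∀ s, StronglyMeasurable (f s)) : StronglyMeasurable fun ω => f (J ω) ω := by
  classical
  have := Fintype.ofFinite S
  have hsum : (fun ω => f (J ω) ω) = fun ω => ∑ s, (J ⁻¹' {s}).indicator (f s) ω := by
    ext ω
    simp [Set.indicator_apply]
  rw [hsum]
  exact Finset.stronglyMeasurable_fun_sum _ fun s _ =>
    (hf s).indicator (hJ (measurableSet_singleton s))

lemma stronglyMeasurable_smul_toLp_mulVec {n m : ℕ} [Finite S] [MeasurableSpace S]
    [MeasurableSingletonClass S] {Ω : Type*} [MeasurableSpace Ω]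
    (σ : S → Matrix (Fin n) (Fin m) ℝ) {J : Ω → S} (hJ : Measurable J) {Z : Ω → Fin m → ℝ}
    (hZ : Measurable Z) (c : ℝ) :
    StronglyMeasurable fun ω => c • (WithLp.equiv 2 (Fin n → ℝ)).symm ((σ (J ω)).mulVec (Z ω)) := by
  have hmulVec (s : S) : Measurable fun ω => WithLp.toLp 2 ((σ s).mulVec (Z ω)) :=
    ((PiLp.continuous_toLp 2 _).comp
      (continuous_const.matrix_mulVec continuous_id)).measurable.comp hZ
  exact (stronglyMeasurable_apply_of_finite hJ fun s => (hmulVec s).stronglyMeasurable).const_smul c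

lemma stronglyMeasurable_eulerScheme [Finite S] [MeasurableSpace S] [MeasurableSingletonClass S]
    {Ω : Type*} [MeasurableSpace Ω] [NormedSpace ℝ E] (hb : ∀ i x y, ‖b x i - b y i‖ ≤ L * ‖x - y‖)
    {J : ℕ → Ω → S} (hJ : ∀ k, Measurable (J k))
    {ζ X : ℕ → Ω → E} (hζ : ∀ k, StronglyMeasurable (ζ k)) {x : E} (hX0 : ∀ ω, X 0 ω = x)
    (hX : ∀ k ω, X (k + 1) ω = X k ω + δ • b (X k ω) (J k ω) + ζ k ω) (k : ℕ) :
    StronglyMeasurable (X k) := by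
  have hcont (i : S) : Continuous fun x => b x i :=
    (LipschitzWith.of_dist_le' fun x y => by simpa only [dist_eq_norm] using hb i x y).continuous
  induction k with
  | zero => simpa only [funext hX0] using stronglyMeasurable_const
  | succ k ih =>
    rw [funext (hX k)]
    exact (ih.add ((stronglyMeasurable_apply_of_finite (hJ k) fun i =>
      (hcont i).comp_stronglyMeasurable ih).const_smul δ)).add (hζ k)

variable [InnerProductSpace ℝ E]

lemma norm_add_smul_sq_le {v w : E} {β : ℝ} (hδ : 0 ≤ δ) (hw : ‖w‖ ≤ L * ‖v‖)
    (hvw : 2 * inner ℝ v w ≤ β * ‖v‖ ^ 2) :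
    ‖v + δ • w‖ ^ 2 ≤ (1 + (δ * β + δ ^ 2 * L ^ 2)) * ‖v‖ ^ 2 :=
  calc ‖v + δ • w‖ ^ 2 = ‖v‖ ^ 2 + δ * (2 * inner ℝ v w) + δ ^ 2 * ‖w‖ ^ 2 := by
        rw [norm_add_sq_real, inner_smul_right, norm_smul, Real.norm_of_nonneg hδ]
        ring
    _ ≤ ‖v‖ ^ 2 + δ * (β * ‖v‖ ^ 2) + δ ^ 2 * (L * ‖v‖) ^ 2 := by gcongr
    _ = (1 + (δ * β + δ ^ 2 * L ^ 2)) * ‖v‖ ^ 2 := by ring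

lemma norm_add_smul_rpow_le {v w : E} {β : ℝ} (hδ : 0 ≤ δ) (hp : 0 ≤ p) (hw : ‖w‖ ≤ L * ‖v‖)
    (hvw : 2 * inner ℝ v w ≤ β * ‖v‖ ^ 2) :
    ‖v + δ • w‖ ^ p ≤ Real.exp (p / 2 * (δ * β + δ ^ 2 * L ^ 2)) * ‖v‖ ^ p := by
  have hsq : ‖v + δ • w‖ ^ 2 ≤ Real.exp (δ * β + δ ^ 2 * L ^ 2) * ‖v‖ ^ 2 :=
    (norm_add_smul_sq_le hδ hw hvw).trans <| mul_le_mul_of_nonneg_right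
      ((add_comm _ _).trans_le (Real.add_one_le_exp _)) (sq_nonneg _)
  have hrpow (z : E) : ‖z‖ ^ p = (‖z‖ ^ 2) ^ (p / 2) := by
    rw [← Real.rpow_natCast_mul (norm_nonneg z), Nat.cast_ofNat, mul_div_cancel₀ p two_ne_zero]
  calc ‖v + δ • w‖ ^ p ≤ (Real.exp (δ * β + δ ^ 2 * L ^ 2) * ‖v‖ ^ 2) ^ (p / 2) := by
        rw [hrpow]
        exact Real.rpow_le_rpow (sq_nonneg _) hsq (by positivity)
    _ = Real.exp (p / 2 * (δ * β + δ ^ 2 * L ^ 2)) * ‖v‖ ^ p := by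
        rw [Real.mul_rpow (Real.exp_pos _).le (sq_nonneg _), ← Real.exp_mul, mul_comm (p / 2),
          ← hrpow]

lemma norm_sub_rpow_le_prod (hb : ∀ i x y, ‖b x i - b y i‖ ≤ L * ‖x - y‖)
    (hβ : ∀ i x y, 2 * inner ℝ (x - y) (b x i - b y i) ≤ β i * ‖x - y‖ ^ 2)
    (hδ : 0 ≤ δ) (hp : 0 ≤ p) {j : ℕ → S} {z u v : ℕ → E}
    (hu : ∀ k, u (k + 1) = u k + δ • b (u k) (j k) + z k)
    (hv : ∀ k, v (k + 1) = v k + δ • b (v k) (j k) + z k) (k : ℕ) :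
    ‖u k - v k‖ ^ p ≤
      (∏ l ∈ Finset.range k, Real.exp (p / 2 * (δ * β (j l) + δ ^ 2 * L ^ 2))) *
        ‖u 0 - v 0‖ ^ p := by
  induction k with
  | zero => simp
  | succ k ih =>
    have hdiff : u (k + 1) - v (k + 1) =
        (u k - v k) + δ • (b (u k) (j k) - b (v k) (j k)) := by
      rw [hu, hv, smul_sub]
      abel
    rw [hdiff, Finset.prod_range_succ, mul_right_comm, mul_comm]
    exact (norm_add_smul_rpow_le hδ hp (hb _ _ _) (hβ _ _ _)).trans
      (mul_le_mul_of_nonneg_left ih (Real.exp_pos _).le)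

end EulerScheme

section ContractionRate

open NormedSpace Matrix

lemma apply_self_nonpos_of_sum_eq_zero {S : Type*} [Fintype S] {Q : Matrix S S ℝ}
    (hQ : ∀ i j, i ≠ j → 0 ≤ Q i j) (hrow : ∀ i, ∑ j, Q i j = 0) (i : S) : Q i i ≤ 0 := by
  classical
  have hsum := hrow i
  rw [← Finset.add_sum_erase _ _ (Finset.mem_univ i)] at hsum
  linarith [Finset.sum_nonneg fun j (hj : j ∈ Finset.univ.erase i) =>
    hQ i j (Finset.ne_of_mem_erase hj).symm]

lemma le_mul_of_isGreatest_of_isLeast_inv {S : Type*} {ξ : S → ℝ} (hξ : ∀ i, 0 < ξ i) {a b : ℝ}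
    (ha : IsGreatest (Set.range ξ) a) (hb : IsLeast (Set.range ξ) b⁻¹) (i j : S) :
    ξ i ≤ a * b * ξ j := by
  obtain ⟨⟨l, hl⟩, hle⟩ := hb
  have hb0 : 0 < b := inv_pos.1 (hl ▸ hξ l)
  have ha0 : 0 < a := (hξ i).trans_le (ha.2 ⟨i, rfl⟩)
  calc ξ i ≤ a := ha.2 ⟨i, rfl⟩
    _ = a * b * b⁻¹ := (mul_inv_cancel_right₀ hb0.ne' a).symm
    _ ≤ a * b * ξ j := by
      gcongr
      exact hle ⟨j, rfl⟩

variable {S : Type*} [DecidableEq S] {Q : Matrix S S ℝ} {β ξ : S → ℝ} {η p δ L β₀ q κ : ℝ}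

/-- The exponential rate of `p`-th moment contraction of synchronously coupled Euler–Maruyama
schemes with step size `δ`: the Perron exponent `η` of `Q + (p/2) diag β`, minus a discretisation
error. Here `β₀` bounds `|β i|`, `q` bounds the jump rates and `κ` the ratios `ξ i / ξ j`. -/
noncomputable def contractionRate (η p L β₀ q κ δ : ℝ) : ℝ :=
  η - p / 2 * (L ^ 2 + β₀ * (q * κ)) * δ

lemma mulVec_le_of_add_diagonal_mulVec_le [Fintype S]
    (hξ : (Q + (p / 2) • diagonal β) *ᵥ ξ ≤ (-η) • ξ) (k : S) :
    (Q *ᵥ ξ) k ≤ -(η + p / 2 * β k) * ξ k := by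
  have hk := hξ k
  simp only [add_mulVec, smul_mulVec, Pi.add_apply, Pi.smul_apply, mulVec_diagonal,
    smul_eq_mul] at hk
  linarith

lemma exp_mul_exp_smul_mulVec_le [Fintype S] (hQ : ∀ i j, i ≠ j → 0 ≤ Q i j)
    (hrow : ∀ i, ∑ j, Q i j = 0) (hp : 0 ≤ p) (hξ0 : ∀ i, 0 ≤ ξ i)
    (hξ : (Q + (p / 2) • diagonal β) *ᵥ ξ ≤ (-η) • ξ) (hκ : ∀ i j, ξ i ≤ κ * ξ j)
    (hβ₀ : ∀ i, |β i| ≤ β₀) (hq : ∀ i, -Q i i ≤ q) (hδ : 0 ≤ δ) (j : S) :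
    Real.exp (p / 2 * (δ * β j + δ ^ 2 * L ^ 2)) * (exp (δ • Q) *ᵥ ξ) j ≤
      Real.exp (-(contractionRate η p L β₀ q κ δ * δ)) * ξ j := by
  have hosc (k : S) : p / 2 * β j - p / 2 * β k ≤ p * β₀ := by
    have := mul_le_mul_of_nonneg_left
      (sub_le_sub (abs_le.1 (hβ₀ j)).2 (abs_le.1 (hβ₀ k)).1) (by positivity : 0 ≤ p / 2)
    linarith
  have hdrift := exp_smul_mulVec_le_mul_exp hQ hrow hξ0 hκ hq
    (mulVec_le_of_add_diagonal_mulVec_le hξ) hosc hδ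
  calc Real.exp (p / 2 * (δ * β j + δ ^ 2 * L ^ 2)) * (exp (δ • Q) *ᵥ ξ) j
      ≤ Real.exp (p / 2 * (δ * β j + δ ^ 2 * L ^ 2)) *
          (ξ j * Real.exp (-(η + p / 2 * β j) * δ + p * β₀ * q * κ * δ ^ 2 / 2)) := by gcongr
    _ = Real.exp (-(contractionRate η p L β₀ q κ δ * δ)) * ξ j := by
        rw [mul_left_comm, ← Real.exp_add, mul_comm, contractionRate]
        congr 2
        ring

lemma sub_mul_rpow_le_contractionRate (hp : 0 ≤ p) (hp2 : p ≤ 2) (hL : 0 ≤ L) (hβ₀ : 0 ≤ β₀)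
    (hqκ : 0 ≤ q * κ) (hδ : 0 < δ) (hδ1 : δ ≤ 1) :
    η - p * (β₀ + 4 * L ^ 2 * (3 + 4 * β₀) +
      (4 : ℝ) ^ ((2 + p) / 2) * β₀ * ((4 : ℝ) ^ (p / 2) * L ^ p + q * κ)) * δ ^ (p / 2) ≤
      contractionRate η p L β₀ q κ δ := by
  have hpow : δ ≤ δ ^ (p / 2) := by
    simpa using Real.rpow_le_rpow_of_exponent_ge hδ hδ1 (by linarith : p / 2 ≤ 1)
  have hfour : (1 : ℝ) ≤ 4 ^ ((2 + p) / 2) :=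
    Real.one_le_rpow (by norm_num) (by positivity)
  have hLp : 0 ≤ (4 : ℝ) ^ (p / 2) * L ^ p := by positivity
  have hconst : p / 2 * (L ^ 2 + β₀ * (q * κ)) ≤ p * (β₀ + 4 * L ^ 2 * (3 + 4 * β₀) +
      (4 : ℝ) ^ ((2 + p) / 2) * β₀ * ((4 : ℝ) ^ (p / 2) * L ^ p + q * κ)) := by
    have hrate : β₀ * (q * κ) ≤
        4 ^ ((2 + p) / 2) * β₀ * ((4 : ℝ) ^ (p / 2) * L ^ p + q * κ) := by
      gcongr
      · exact le_mul_of_one_le_left hβ₀ hfour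
      · exact le_add_of_nonneg_left hLp
    have hlip : L ^ 2 ≤ 4 * L ^ 2 * (3 + 4 * β₀) := by
      nlinarith [mul_nonneg (sq_nonneg L) hβ₀, sq_nonneg L]
    gcongr
    · exact half_le_self hp
    · linarith
  rw [contractionRate]
  gcongr

end ContractionRate

section Contraction

open NormedSpace Matrix

variable {S : Type*} [DecidableEq S] {Q : Matrix S S ℝ} {β ξ : S → ℝ} {η p δ L β₀ q κ : ℝ}
  {E : Type*} [NormedAddCommGroup E] [InnerProductSpace ℝ E] {b : E → S → E}
  [MeasurableSpace S] [MeasurableSingletonClass S] {Ω : Type*} [MeasurableSpace Ω]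
  {J : ℕ → Ω → S} {ζ X Y : ℕ → Ω → E}

theorem stmt7_general [Fintype S] (hQ : ∀ i j, i ≠ j → 0 ≤ Q i j) (hrow : ∀ i, ∑ j, Q i j = 0)
    (hb : ∀ i x y, ‖b x i - b y i‖ ≤ L * ‖x - y‖)
    (hβ : ∀ i x y, 2 * inner ℝ (x - y) (b x i - b y i) ≤ β i * ‖x - y‖ ^ 2)
    (hp : 0 ≤ p) (hξ0 : ∀ i, 0 < ξ i) (hξ : (Q + (p / 2) • diagonal β) *ᵥ ξ ≤ (-η) • ξ)
    (hκ : ∀ i j, ξ i ≤ κ * ξ j) (hβ₀ : ∀ i, |β i| ≤ β₀) (hq : ∀ i, -Q i i ≤ q) (hδ : 0 ≤ δ)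
    {P : Measure Ω} [IsFiniteMeasure P] {i : S} (hJ : IsMarkovChainFrom P (exp (δ • Q)) i J)
    (hζ : ∀ k, StronglyMeasurable (ζ k)) {x y : E}
    (hX0 : ∀ ω, X 0 ω = x) (hX : ∀ k ω, X (k + 1) ω = X k ω + δ • b (X k ω) (J k ω) + ζ k ω)
    (hY0 : ∀ ω, Y 0 ω = y) (hY : ∀ k ω, Y (k + 1) ω = Y k ω + δ • b (Y k ω) (J k ω) + ζ k ω)
    (k : ℕ) :
    Integrable (fun ω => ‖X k ω - Y k ω‖ ^ p) P ∧
      ∫ ω, ‖X k ω - Y k ω‖ ^ p ∂P ≤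
        κ * ‖x - y‖ ^ p * Real.exp (-(contractionRate η p L β₀ q κ δ * k * δ)) := by
  let g : S → ℝ := fun j => Real.exp (p / 2 * (δ * β j + δ ^ 2 * L ^ 2))
  have hpath (ω : Ω) :
      ‖X k ω - Y k ω‖ ^ p ≤ (∏ l ∈ Finset.range k, g (J l ω)) * ‖x - y‖ ^ p := by
    simpa only [hX0, hY0] using norm_sub_rpow_le_prod (u := (X · ω)) (v := (Y · ω)) hb hβ hδ hp
      (hX · ω) (hY · ω) k
  have hweight := (hJ.integrable_prod g k).mul_const (‖x - y‖ ^ p)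
  have hmeas : StronglyMeasurable fun ω => X k ω - Y k ω :=
    (stronglyMeasurable_eulerScheme hb hJ.measurable hζ hX0 hX k).sub
      (stronglyMeasurable_eulerScheme hb hJ.measurable hζ hY0 hY k)
  have hint : Integrable (fun ω => ‖X k ω - Y k ω‖ ^ p) P :=
    hweight.mono' (hmeas.norm.measurable.pow_const p).aestronglyMeasurable <|
      .of_forall fun ω =>
        (Real.norm_of_nonneg (Real.rpow_nonneg (norm_nonneg _) p)).trans_le (hpath ω)
  refine ⟨hint, ?_⟩
  calc ∫ ω, ‖X k ω - Y k ω‖ ^ p ∂P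
      ≤ (∫ ω, ∏ l ∈ Finset.range k, g (J l ω) ∂P) * ‖x - y‖ ^ p :=
        (integral_mono hint hweight hpath).trans_eq (integral_mul_const _ _)
    _ ≤ κ * Real.exp (-(contractionRate η p L β₀ q κ δ * δ)) ^ k * ‖x - y‖ ^ p := by
        gcongr
        exact hJ.integral_prod_le (fun j => (Real.exp_pos _).le) hξ0 hκ (Real.exp_pos _).le
          (exp_mul_exp_smul_mulVec_le hQ hrow hp (fun j => (hξ0 j).le) hξ hκ hβ₀ hq hδ) k
    _ = κ * ‖x - y‖ ^ p * Real.exp (-(contractionRate η p L β₀ q κ δ * k * δ)) := by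
        rw [← Real.exp_nat_mul, mul_right_comm]
        congr 2
        ring

end Contraction

theorem stmt7 {n m N : ℕ} (hN : 2 ≤ N)
    (Q : Matrix (Fin N) (Fin N) ℝ)
    (hQ : IsConservativeQMatrix Q) (hirr : MatrixIrreducible Q)
    (μ : Fin N → ℝ) (hμpos : ∀ i, 0 < μ i) (hμsum : ∑ i, μ i = 1)
    (hμstat : ∀ j, ∑ i, μ i * Q i j = 0)
    (b : EuclideanSpace ℝ (Fin n) → Fin N → EuclideanSpace ℝ (Fin n))
    (σ : EuclideanSpace ℝ (Fin n) → Fin N → Matrix (Fin n) (Fin m) ℝ)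
    -- additive noise : `σ` does not depend on the space variable
    (hadd : ∀ x y i, σ x i = σ y i)
    -- global Lipschitz condition
    (L : ℝ) (hL : 0 ≤ L)
    (hLip : ∀ i x y, ‖b x i - b y i‖ + hsNorm (σ x i - σ y i) ≤ L * ‖x - y‖)
    -- condition (H)
    (c₀ : ℝ) (hc₀ : 0 < c₀) (β : Fin N → ℝ)
    (hH1 : ∀ i x, 2 * (inner ℝ x (b x i) : ℝ) + hsNorm (σ x i) ^ 2 ≤ c₀ + β i * ‖x‖ ^ 2)
    (hH2 : ∀ i x y, 2 * (inner ℝ (x - y) (b x i - b y i) : ℝ)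
        + hsNorm (σ x i - σ y i) ^ 2 ≤ β i * ‖x - y‖ ^ 2)
    -- averaging condition
    (havg : ∑ i, μ i * β i < 0)
    -- `p`, `η_p` and the Perron–Frobenius eigenvector `ξ`
    (p : ℝ) (hp : 0 < p) (hp1 : p < 1) (ηp : ℝ)
    (hη : IsGreatest (spectrumRe (Q + (p / 2) • Matrix.diagonal β)) (-ηp))
    (hηpos : 0 < ηp)
    (ξ : Fin N → ℝ) (hξpos : ∀ i, 0 < ξ i)
    (hξeig : (Q + (p / 2) • Matrix.diagonal β).mulVec ξ = (-ηp) • ξ)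
    -- the constants of Theorem 3.1
    (ξhat ξbar β₀ q₀ α : ℝ)
    (hξhat : IsGreatest (Set.range ξ) ξhat)
    (hξbar : IsLeast (Set.range ξ) ξbar⁻¹)
    (hβ₀ : IsGreatest (Set.range fun i => |β i|) β₀)
    (hq₀ : IsGreatest (Set.range fun i => -Q i i) q₀)
    (hα : α = p * (β₀ + 4 * L ^ 2 * (3 + 4 * β₀)
        + (4 : ℝ) ^ ((2 + p) / 2) * β₀ * ((4 : ℝ) ^ (p / 2) * L ^ p + q₀ * ξhat * ξbar)))
    -- the stepsize
    (δ : ℝ) (hδ0 : 0 < δ) (hδ1 : δ < 1)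
    (hδ : δ < min (1 / (16 * L ^ 2)) ((ηp / α) ^ (2 / p)))
    -- the driving randomness : i.i.d. standard Gaussian vectors `Z` and an
    -- independent Markov chain `J` with one-step transition matrix `exp(δ Q)`
    -- started at `i`
    (Ω : Type*) [MeasurableSpace Ω] (P : Measure Ω) [IsProbabilityMeasure P]
    (i : Fin N)
    (Z : ℕ → Ω → (Fin m → ℝ)) (J : ℕ → Ω → Fin N)
    (hZmeas : ∀ k, Measurable (Z k)) (hJmeas : ∀ k, Measurable (J k))
    (hZindep : iIndepFun Z P)
    (hZlaw : ∀ k, Measure.map (Z k) P = stdGaussianPi m)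
    (hJchain : ∀ (k : ℕ) (j : ℕ → Fin N),
      P {ω | ∀ l ≤ k, J l ω = j l} =
        ENNReal.ofReal ((if j 0 = i then (1 : ℝ) else 0) *
          ∏ l ∈ Finset.range k, matExp (δ • Q) (j l) (j (l + 1))))
    (hZJindep : IndepFun (fun ω l => Z l ω) (fun ω l => J l ω) P)
    -- the synchronously coupled Euler–Maruyama sequences
    (Ybar : EuclideanSpace ℝ (Fin n) → ℕ → Ω → EuclideanSpace ℝ (Fin n))
    (hY0 : ∀ x ω, Ybar x 0 ω = x)
    (hYrec : ∀ x k ω, Ybar x (k + 1) ω =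
      Ybar x k ω + δ • b (Ybar x k ω) (J k ω) +
        Real.sqrt δ •
          ((WithLp.equiv 2 (Fin n → ℝ)).symm
            ((σ (Ybar x k ω) (J k ω)).mulVec (Z k ω)))) :
    ∀ (x y : EuclideanSpace ℝ (Fin n)) (k : ℕ),
      ∫ ω, ‖Ybar x k ω - Ybar y k ω‖ ^ p ∂P ≤
        ξhat * ξbar * ‖x - y‖ ^ p *
          Real.exp (-((ηp - α * δ ^ (p / 2)) * k * δ)) := by
  intro x y k
  have hκ := le_mul_of_isGreatest_of_isLeast_inv hξpos hξhat hξbar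
  have hκ0 : 0 ≤ ξhat * ξbar := nonneg_of_mul_nonneg_left ((hξpos i).le.trans (hκ i i)) (hξpos i)
  have hβ (j : Fin N) : |β j| ≤ β₀ := hβ₀.2 ⟨j, rfl⟩
  have hq (j : Fin N) : -Q j j ≤ q₀ := hq₀.2 ⟨j, rfl⟩
  have hq0 : 0 ≤ q₀ := (neg_nonneg.2 (apply_self_nonpos_of_sum_eq_zero hQ.1 hQ.2 i)).trans (hq i)
  have hchain : IsMarkovChainFrom P (NormedSpace.exp (δ • Q)) i J :=
    .of_measure_cylinder (exp_smul_mem_rowStochastic hQ.1 hQ.2 hδ0.le).1 hJmeas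
      (by simpa only [matExp_eq_exp] using hJchain)
  have hrate : ηp - α * δ ^ (p / 2) ≤ contractionRate ηp p L β₀ q₀ (ξhat * ξbar) δ := by
    rw [hα, mul_assoc q₀]
    exact sub_mul_rpow_le_contractionRate hp.le (by linarith) hL
      ((abs_nonneg _).trans (hβ i)) (mul_nonneg hq0 hκ0) hδ0 hδ1.le
  exact (stmt7_general hQ.1 hQ.2
    (fun j x y => (le_add_of_nonneg_right (Real.sqrt_nonneg _)).trans (hLip j x y))
    (fun j x y => (le_add_of_nonneg_right (sq_nonneg _)).trans (hH2 j x y))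
    hp.le hξpos hξeig.le hκ hβ hq hδ0.le hchain
    (fun k => stronglyMeasurable_smul_toLp_mulVec (σ 0) (hJmeas k) (hZmeas k) (√δ))
    (hY0 x) (fun k ω => by rw [hYrec, hadd _ 0]) (hY0 y) (fun k ω => by rw [hYrec, hadd _ 0])
    k).2.trans (by gcongr)
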